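/- Under Assumptions (A), (B) and (C): let {h^ε}_{0<ε≤ε₀} ∈ 𝓑_V with h^ε → h pointwise, and for each ε let η^ε_t(·;h^ε) be a selection with η^ε_t(x;h^ε) ∈ argmin_{u∈U}[f_{t,t}(x,u) + Λ^ε_t(x,u;h^ε)] for all x. Then every sequence ε_n → 0⁺ has a subsequence along which η^{ε_n}_t(x;h^{ε_n}) converges in U for every x ∈ ℤ, and every such pointwise limit η⁰ satisfies η⁰(x) ∈ argmin_{u∈U}[f_{t,t}(x,u) + Λ_t(x,u;h)] for every x ∈ ℤ. -/

import Mathlib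

open Filter Topology

/-- The setup for a countable-stated (here `ℤ`-stated) risk-sensitive MDP with horizon `T`,
transition kernels `q ε t · x u` (for `0 < ε ≤ eps0`), rate functions `I`, running costs
`f τ t x u` and terminal costs `g τ x`.  The Lyapunov function `V` is positive and inf-finite. -/
structure RSSetup (U : Type*) [MetricSpace U] where
  T : ℕ
  eps0 : ℝ
  eps0_pos : 0 < eps0
  V : ℤ → ℝ
  V_pos : ∀ x, 0 < V x
  V_infFinite : ∀ K : ℝ, {x : ℤ | V x ≤ K}.Finite
  q : ℝ → ℕ → ℤ → U → ℤ → ℝ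
  q_nonneg : ∀ ε ∈ Set.Ioc (0 : ℝ) eps0, ∀ t ∈ Finset.Icc 1 T, ∀ (x : ℤ) (u : U) (z : ℤ),
    0 ≤ q ε t x u z
  q_pmf : ∀ ε ∈ Set.Ioc (0 : ℝ) eps0, ∀ t ∈ Finset.Icc 1 T, ∀ (x : ℤ) (u : U),
    HasSum (q ε t x u) 1
  I : ℕ → ℤ → U → ℤ → ENNReal
  I_subfin : ∀ (t : ℕ) (x : ℤ) (u : U) (K : ENNReal), K ≠ ⊤ → {z : ℤ | I t x u z ≤ K}.Finite
  f : ℕ → ℕ → ℤ → U → ℝ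
  g : ℕ → ℤ → ℝ

namespace RSSetup

variable {U : Type*} [MetricSpace U]

/-- `Λ^ε_t(x,u;h) = ε log ∑_z exp(h(z)/ε) q^ε_t(z;x,u)`. -/
noncomputable def lamE (S : RSSetup U) (ε : ℝ) (t : ℕ) (x : ℤ) (u : U) (h : ℤ → ℝ) : ℝ :=
  ε * Real.log (∑' z : ℤ, Real.exp (h z / ε) * S.q ε t x u z)

/-- `Λ_t(x,u;h) = sup_z [h(z) - I_t(z;x,u)]` (the supremum being over the points where the
rate function is finite). -/
noncomputable def lam (S : RSSetup U) (t : ℕ) (x : ℤ) (u : U) (h : ℤ → ℝ) : ℝ :=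
  sSup ((fun z => h z - (S.I t x u z).toReal) '' {z : ℤ | S.I t x u z ≠ ⊤})

/-- Membership in `B_V`: bounded below and `|h(x)|/V(x) → 0` as `|x| → ∞`. -/
def memBV (S : RSSetup U) (h : ℤ → ℝ) : Prop :=
  BddBelow (Set.range h) ∧
    Tendsto (fun x : ℤ => |h x| / S.V x) Filter.cofinite (nhds 0)

/-- The pointwise supremum `x ↦ sup_{0<ε≤ε₀} h^ε(x)` of a family. -/
noncomputable def supFam (S : RSSetup U) (h : ℝ → ℤ → ℝ) : ℤ → ℝ :=
  fun x => sSup ((fun ε => h ε x) '' Set.Ioc (0 : ℝ) S.eps0)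

/-- Membership of a family `{h^ε}_{0<ε≤ε₀}` in `𝓑_V`: each member is in `B_V`, the family is
uniformly bounded below, and the pointwise supremum `sup_ε h^ε` belongs to `B_V`. -/
def memFam (S : RSSetup U) (h : ℝ → ℤ → ℝ) : Prop :=
  (∀ ε ∈ Set.Ioc (0 : ℝ) S.eps0, S.memBV (h ε)) ∧
  (∃ c : ℝ, ∀ ε ∈ Set.Ioc (0 : ℝ) S.eps0, ∀ x, c ≤ h ε x) ∧
  (∀ x, BddAbove ((fun ε => h ε x) '' Set.Ioc (0 : ℝ) S.eps0)) ∧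
  S.memBV (S.supFam h)

/-- Assumption (A) with parameter `λ₀`. -/
def AssumptionA (S : RSSetup U) (lam0 : ℝ) : Prop :=
  0 < lam0 ∧
  -- (A1): `sup_{0<ε≤ε₀} Λ^ε_t(x,u;λ₀ V) < ∞` (in particular the defining sums converge)
  (∀ t ∈ Finset.Icc 1 S.T, ∀ (x : ℤ) (u : U),
    (∀ ε ∈ Set.Ioc (0 : ℝ) S.eps0,
      Summable fun z : ℤ => Real.exp (lam0 * S.V z / ε) * S.q ε t x u z) ∧
    ∃ C : ℝ, ∀ ε ∈ Set.Ioc (0 : ℝ) S.eps0, S.lamE ε t x u (fun z => lam0 * S.V z) ≤ C) ∧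
  -- (A2): continuity in `u`, and `Λ^ε_t(x,u^ε;h) → Λ_t(x,u;h)` whenever `u^ε → u`
  (∀ t ∈ Finset.Icc 1 S.T, ∀ x : ℤ, ∀ h : ℤ → ℝ, S.memBV h →
    (∀ ε ∈ Set.Ioc (0 : ℝ) S.eps0, Continuous fun u : U => S.lamE ε t x u h) ∧
    (∀ (u : U) (uu : ℝ → U), Tendsto uu (nhdsWithin 0 (Set.Ioi 0)) (nhds u) →
      Tendsto (fun ε => S.lamE ε t x (uu ε) h) (nhdsWithin 0 (Set.Ioi 0))
        (nhds (S.lam t x u h)))) ∧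
  -- (A3): `limsup_{|x|→∞} sup_{0<ε≤ε₀} Λ^ε_t(x,u;λV)/(λV(x)) < K_u` for `λ ∈ (0,λ₀)`
  (∀ t ∈ Finset.Icc 1 S.T, ∀ u : U, ∃ Ku : ℝ, ∀ lam' ∈ Set.Ioo (0 : ℝ) lam0,
    ∃ c < Ku, ∀ᶠ x in (Filter.cofinite : Filter ℤ), ∀ ε ∈ Set.Ioc (0 : ℝ) S.eps0,
      S.lamE ε t x u (fun z => lam' * S.V z) ≤ c * (lam' * S.V x))

/-- Assumption (B). -/
def AssumptionB (S : RSSetup U) : Prop :=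
  (∀ τ ∈ Finset.Icc 1 S.T, ∀ t ∈ Finset.Icc 1 S.T, ∀ u : U,
    S.memBV fun x => S.f τ t x u) ∧
  (∀ τ ∈ Finset.Icc 1 S.T, S.memBV (S.g τ)) ∧
  (∀ t ∈ Finset.Icc 1 S.T, ∀ x : ℤ, Continuous fun u : U => S.f t t x u) ∧
  (∀ t ∈ Finset.Icc 1 S.T, ∀ x : ℤ, ∀ K : ℝ, IsCompact {u : U | S.f t t x u ≤ K})

/-- Assumption (C) with parameter `λ₀`: growth conditions over the sublevel sets
`B_{t,λ}(x) = {u : f_{t,t}(x,u) ≤ λ V(x)}`. -/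
def AssumptionC (S : RSSetup U) (lam0 : ℝ) : Prop :=
  0 < lam0 ∧ ∃ K1 : ℝ,
    ∀ lam' ∈ Set.Ioo (0 : ℝ) lam0, ∀ τ ∈ Finset.Icc 1 S.T, ∀ t ∈ Finset.Icc 1 S.T,
      (∀ c > K1, ∀ᶠ x in (Filter.cofinite : Filter ℤ), ∀ u : U,
        S.f t t x u ≤ lam' * S.V x → S.f τ t x u ≤ c * (lam' * S.V x)) ∧
      (∀ c > K1, ∀ᶠ x in (Filter.cofinite : Filter ℤ), ∀ ε ∈ Set.Ioo (0 : ℝ) S.eps0, ∀ u : U,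
        S.f t t x u ≤ lam' * S.V x →
          S.lamE ε t x u (fun z => lam' * S.V z) ≤ c * (lam' * S.V x))

/-- The cost `J^ε_{τ,t}(x;π)` of a Markov policy `π`, defined backward from
`J^ε_{τ,T+1} = g_τ`. -/
noncomputable def Jeps (S : RSSetup U) (ε : ℝ) (π : ℕ → ℤ → U) (τ t : ℕ) : ℤ → ℝ :=
  if h : S.T + 1 ≤ t then S.g τ
  else fun x => S.f τ t x (π t x) + S.lamE ε t x (π t x) (S.Jeps ε π τ (t + 1))
termination_by S.T + 1 - t
decreasing_by omega

/-- The limit cost `J_{τ,t}(x;π)` of a Markov policy `π`, defined backward from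
`J_{τ,T+1} = g_τ`. -/
noncomputable def Jlim (S : RSSetup U) (π : ℕ → ℤ → U) (τ t : ℕ) : ℤ → ℝ :=
  if h : S.T + 1 ≤ t then S.g τ
  else fun x => S.f τ t x (π t x) + S.lam t x (π t x) (S.Jlim π τ (t + 1))
termination_by S.T + 1 - t
decreasing_by omega

/-- `(η, Θ)` solves the `ε`-recursion system. -/
def SolvesEpsSystem (S : RSSetup U) (ε : ℝ) (η : ℕ → ℤ → U) (Θ : ℕ → ℕ → ℤ → ℝ) : Prop :=
  (∀ τ ∈ Finset.Icc 1 S.T, Θ τ (S.T + 1) = S.g τ) ∧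
  (∀ t ∈ Finset.Icc 1 S.T, ∀ (x : ℤ) (u : U),
    S.f t t x (η t x) + S.lamE ε t x (η t x) (Θ t (t + 1)) ≤
      S.f t t x u + S.lamE ε t x u (Θ t (t + 1))) ∧
  (∀ τ ∈ Finset.Icc 1 S.T, ∀ t ∈ Finset.Icc 1 S.T, ∀ x : ℤ,
    Θ τ t x = S.f τ t x (η t x) + S.lamE ε t x (η t x) (Θ τ (t + 1)))

/-- `(η, Θ)` solves the limit recursion system. -/
def SolvesLimSystem (S : RSSetup U) (η : ℕ → ℤ → U) (Θ : ℕ → ℕ → ℤ → ℝ) : Prop :=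
  (∀ τ ∈ Finset.Icc 1 S.T, Θ τ (S.T + 1) = S.g τ) ∧
  (∀ t ∈ Finset.Icc 1 S.T, ∀ (x : ℤ) (u : U),
    S.f t t x (η t x) + S.lam t x (η t x) (Θ t (t + 1)) ≤
      S.f t t x u + S.lam t x u (Θ t (t + 1))) ∧
  (∀ τ ∈ Finset.Icc 1 S.T, ∀ t ∈ Finset.Icc 1 S.T, ∀ x : ℤ,
    Θ τ t x = S.f τ t x (η t x) + S.lam t x (η t x) (Θ τ (t + 1)))

/-- `π` is a time-inconsistent `ε`-risk-sensitive equilibrium. -/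
def IsEpsEquilibrium (S : RSSetup U) (ε : ℝ) (π : ℕ → ℤ → U) : Prop :=
  ∀ t ∈ Finset.Icc 1 S.T, ∀ (x : ℤ) (u : U),
    S.Jeps ε π t t x ≤ S.f t t x u + S.lamE ε t x u (S.Jeps ε π t (t + 1))

/-- `π` is a time-inconsistent risk-sensitive equilibrium for the limit cost. -/
def IsLimEquilibrium (S : RSSetup U) (π : ℕ → ℤ → U) : Prop :=
  ∀ t ∈ Finset.Icc 1 S.T, ∀ (x : ℤ) (u : U),
    S.Jlim π t t x ≤ S.f t t x u + S.lam t x u (S.Jlim π t (t + 1))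

end RSSetup

namespace RSSetup

variable {U : Type*} [MetricSpace U]

lemma V_tendsto (S : RSSetup U) : Tendsto S.V Filter.cofinite atTop := by
  rw [tendsto_atTop]
  intro b
  have := (S.V_infFinite b).eventually_cofinite_notMem
  filter_upwards [this] with z hz
  simp only [Set.mem_setOf_eq, not_le] at hz
  exact hz.le

lemma memBV_of (S : RSSetup U) {H k : ℤ → ℝ} (hH : S.memBV H) (c d : ℝ)
    (h1 : ∀ z, c ≤ k z) (h2 : ∀ z, k z ≤ H z + d) : S.memBV k := by
  refine ⟨⟨c, ?_⟩, ?_⟩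
  · rintro _ ⟨z, rfl⟩
    exact h1 z
  · have hl : Tendsto (fun z => |H z| / S.V z + (|c| + |d|) / S.V z) Filter.cofinite (𝓝 0) := by
      have := hH.2.add (S.V_tendsto.const_div_atTop (|c| + |d|))
      simpa using this
    refine squeeze_zero (fun z => div_nonneg (abs_nonneg _) (S.V_pos z).le) (fun z => ?_) hl
    rw [← add_div]
    apply div_le_div_of_nonneg_right _ (S.V_pos z).le
    rw [abs_le]
    constructor
    · have := neg_abs_le c
      have := abs_nonneg (H z)
      have := abs_nonneg d
      linarith [h1 z]
    · have := abs_nonneg c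
      have := le_abs_self (H z)
      have := le_abs_self d
      linarith [h2 z]

lemma memBV_zero (S : RSSetup U) : S.memBV (fun _ => 0) :=
  ⟨⟨0, by rintro _ ⟨z, rfl⟩; exact le_rfl⟩, by simp⟩

lemma memBV_ev (S : RSSetup U) {H : ℤ → ℝ} (hH : S.memBV H) {a : ℝ} (ha : 0 < a) (M : ℝ) :
    ∀ᶠ z in (Filter.cofinite : Filter ℤ), H z ≤ a * S.V z - M := by
  have h1 := hH.2.eventually (gt_mem_nhds (half_pos ha))
  have h2 := S.V_tendsto.eventually_ge_atTop (M / (a / 2))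
  filter_upwards [h1, h2] with z hz1 hz2
  rw [div_lt_iff₀ (S.V_pos z)] at hz1
  rw [div_le_iff₀ (half_pos ha)] at hz2
  have := le_abs_self (H z)
  linarith

lemma memBV_le (S : RSSetup U) {H : ℤ → ℝ} (hH : S.memBV H) {a : ℝ} (ha : 0 < a) :
    ∃ C, ∀ z, H z ≤ a * S.V z + C := by
  have h1 := S.memBV_ev hH ha 0
  rw [Filter.eventually_cofinite] at h1
  obtain ⟨C, hC⟩ := (h1.image H).bddAbove
  refine ⟨max C 0, fun z => ?_⟩
  by_cases hz : H z ≤ a * S.V z - 0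
  · linarith [le_max_right C 0]
  · have : H z ≤ C := hC ⟨z, hz, rfl⟩
    have := mul_pos ha (S.V_pos z)
    linarith [le_max_left C 0]

lemma summ_of (S : RSSetup U) {lam0 : ℝ} (hA : S.AssumptionA lam0) {t : ℕ}
    (ht : t ∈ Finset.Icc 1 S.T) (x : ℤ) (u : U) {ε : ℝ} (hε : ε ∈ Set.Ioc (0 : ℝ) S.eps0)
    {k : ℤ → ℝ} {C : ℝ} (hk : ∀ z, k z ≤ lam0 * S.V z + C) :
    Summable fun z : ℤ => Real.exp (k z / ε) * S.q ε t x u z := by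
  have h1 := ((hA.2.1 t ht x u).1 ε hε).mul_left (Real.exp (C / ε))
  refine Summable.of_nonneg_of_le
    (fun z => mul_nonneg (Real.exp_pos _).le (S.q_nonneg ε hε t ht x u z)) (fun z => ?_) h1
  rw [← mul_assoc, ← Real.exp_add]
  apply mul_le_mul_of_nonneg_right _ (S.q_nonneg ε hε t ht x u z)
  apply Real.exp_le_exp.2
  rw [← add_div]
  apply div_le_div_of_nonneg_right _ hε.1.le
  linarith [hk z]

lemma lamE_const (S : RSSetup U) {t : ℕ}
    (ht : t ∈ Finset.Icc 1 S.T) (x : ℤ) (u : U) {ε : ℝ} (hε : ε ∈ Set.Ioc (0 : ℝ) S.eps0)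
    (c : ℝ) : S.lamE ε t x u (fun _ => c) = c := by
  unfold lamE
  rw [tsum_mul_left, (S.q_pmf ε hε t ht x u).tsum_eq, mul_one, Real.log_exp]
  exact mul_div_cancel₀ _ hε.1.ne'

lemma lamE_mono (S : RSSetup U) {lam0 : ℝ} (hA : S.AssumptionA lam0) {t : ℕ}
    (ht : t ∈ Finset.Icc 1 S.T) (x : ℤ) (u : U) {ε : ℝ} (hε : ε ∈ Set.Ioc (0 : ℝ) S.eps0)
    {k l : ℤ → ℝ} {c C : ℝ} (hc : ∀ z, c ≤ k z) (hkl : ∀ z, k z ≤ l z)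
    (hl : ∀ z, l z ≤ lam0 * S.V z + C) : S.lamE ε t x u k ≤ S.lamE ε t x u l := by
  have step : ∀ {k l : ℤ → ℝ}, (∀ z, k z ≤ l z) → (∀ z, l z ≤ lam0 * S.V z + C) →
      ∑' z : ℤ, Real.exp (k z / ε) * S.q ε t x u z ≤
        ∑' z : ℤ, Real.exp (l z / ε) * S.q ε t x u z := by
    intro k l hkl hl
    refine Summable.tsum_le_tsum (fun z => ?_)
      (S.summ_of hA ht x u hε (fun z => (hkl z).trans (hl z))) (S.summ_of hA ht x u hε hl)
    apply mul_le_mul_of_nonneg_right _ (S.q_nonneg ε hε t ht x u z)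
    exact Real.exp_le_exp.2 (div_le_div_of_nonneg_right (hkl z) hε.1.le)
  have hpos : 0 < ∑' z : ℤ, Real.exp (k z / ε) * S.q ε t x u z := by
    refine lt_of_lt_of_le ?_ (step (k := fun _ => c) hc (fun z => (hkl z).trans (hl z)))
    rw [tsum_mul_left, (S.q_pmf ε hε t ht x u).tsum_eq, mul_one]
    exact Real.exp_pos _
  exact mul_le_mul_of_nonneg_left (Real.log_le_log hpos (step hkl hl)) hε.1.le

lemma ev_Ioc (S : RSSetup U) : ∀ᶠ ε in 𝓝[>] (0 : ℝ), ε ∈ Set.Ioc (0 : ℝ) S.eps0 :=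
  Ioc_mem_nhdsGT S.eps0_pos

lemma dom_nonempty (S : RSSetup U) {lam0 : ℝ} (hA : S.AssumptionA lam0) {t : ℕ}
    (ht : t ∈ Finset.Icc 1 S.T) (x : ℤ) (u : U) : {z : ℤ | S.I t x u z ≠ ⊤}.Nonempty := by
  by_contra hne
  rw [Set.not_nonempty_iff_eq_empty] at hne
  have hm : S.memBV (fun _ => (1 : ℝ)) :=
    S.memBV_of S.memBV_zero 1 1 (fun _ => le_rfl) (fun _ => by simp)
  have h1 := (hA.2.2.1 t ht x _ hm).2 u (fun _ => u) tendsto_const_nhds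
  have h2 : Tendsto (fun ε => S.lamE ε t x u (fun _ => (1 : ℝ))) (𝓝[>] (0 : ℝ)) (𝓝 1) := by
    refine tendsto_const_nhds.congr' ?_
    filter_upwards [S.ev_Ioc] with ε hε
    exact (S.lamE_const ht x u hε 1).symm
  have h3 := tendsto_nhds_unique h1 h2
  unfold lam at h3
  rw [hne] at h3
  simp at h3

lemma rate_bound (S : RSSetup U) {lam0 : ℝ} (hA : S.AssumptionA lam0) {t : ℕ}
    (ht : t ∈ Finset.Icc 1 S.T) (x : ℤ) (u : U) :
    ∃ C : ℝ, ∀ z, S.I t x u z ≠ ⊤ → lam0 * S.V z - (S.I t x u z).toReal ≤ C := by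
  obtain ⟨C, hC⟩ := (hA.2.1 t ht x u).2
  refine ⟨C, fun z hz => ?_⟩
  have h0 := hA.1
  set k : ℤ → ℝ := fun y => lam0 * min (S.V y) (S.V z) with hk
  have hk0 : ∀ y, 0 ≤ k y := fun y =>
    mul_nonneg h0.le (le_min (S.V_pos y).le (S.V_pos z).le)
  have hk1 : ∀ y, k y ≤ lam0 * S.V z := fun y =>
    mul_le_mul_of_nonneg_left (min_le_right _ _) h0.le
  have hm : S.memBV k := S.memBV_of S.memBV_zero 0 (lam0 * S.V z) hk0
    (fun y => by simpa using hk1 y)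
  have h1 := (hA.2.2.1 t ht x _ hm).2 u (fun _ => u) tendsto_const_nhds
  have h2 : S.lam t x u k ≤ C := by
    refine le_of_tendsto h1 ?_
    filter_upwards [S.ev_Ioc] with ε hε
    refine le_trans ?_ (hC ε hε)
    exact S.lamE_mono hA ht x u hε (C := 0) hk0
      (fun y => mul_le_mul_of_nonneg_left (min_le_left _ _) h0.le) (fun y => by simp)
  refine le_trans ?_ h2
  have : lam0 * S.V z = k z := by simp [hk]
  rw [this]
  refine le_csSup ⟨lam0 * S.V z, ?_⟩ ⟨z, hz, rfl⟩
  rintro _ ⟨y, -, rfl⟩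
  have : 0 ≤ (S.I t x u y).toReal := ENNReal.toReal_nonneg
  have := hk1 y
  simp only
  linarith

lemma bdd_lam (S : RSSetup U) {lam0 : ℝ} (hA : S.AssumptionA lam0) {t : ℕ}
    (ht : t ∈ Finset.Icc 1 S.T) (x : ℤ) (u : U) {h : ℤ → ℝ} (hh : S.memBV h) :
    BddAbove ((fun z => h z - (S.I t x u z).toReal) '' {z : ℤ | S.I t x u z ≠ ⊤}) := by
  obtain ⟨C, hC⟩ := S.rate_bound hA ht x u
  obtain ⟨D, hD⟩ := S.memBV_le hh hA.1
  refine ⟨C + D, ?_⟩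
  rintro _ ⟨y, hy, rfl⟩
  have := hC y hy
  have := hD y
  simp only
  linarith

lemma key (S : RSSetup U) {lam0 : ℝ} (hA : S.AssumptionA lam0) {t : ℕ}
    (ht : t ∈ Finset.Icc 1 S.T) (x : ℤ) (u : U) (uu : ℝ → U)
    (huu : Tendsto uu (𝓝[>] (0 : ℝ)) (𝓝 u))
    (hfam : ℝ → ℤ → ℝ) (hmem : S.memFam hfam) (h : ℤ → ℝ)
    (hptw : ∀ x : ℤ, Tendsto (fun ε => hfam ε x) (𝓝[>] (0 : ℝ)) (𝓝 (h x))) :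
    Tendsto (fun ε => S.lamE ε t x (uu ε) (hfam ε)) (𝓝[>] (0 : ℝ)) (𝓝 (S.lam t x u h)) := by
  classical
  obtain ⟨hm1, ⟨c, hc⟩, hbdd, hH⟩ := hmem
  set H := S.supFam hfam with hHdef
  have hleH : ∀ ε ∈ Set.Ioc (0 : ℝ) S.eps0, ∀ z, hfam ε z ≤ H z := fun ε hε z =>
    le_csSup (hbdd z) ⟨ε, hε, rfl⟩
  have hch : ∀ z, c ≤ h z := fun z => ge_of_tendsto (hptw z) (by
    filter_upwards [S.ev_Ioc] with ε hε using hc ε hε z)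
  have hhH : ∀ z, h z ≤ H z := fun z => le_of_tendsto (hptw z) (by
    filter_upwards [S.ev_Ioc] with ε hε using hleH ε hε z)
  have hh : S.memBV h := S.memBV_of hH c 0 hch (by simpa using hhH)
  have hb := S.bdd_lam hA ht x u hh
  have hne := S.dom_nonempty hA ht x u
  obtain ⟨D, hD⟩ := S.memBV_le hH hA.1
  rw [tendsto_order]
  constructor
  · intro a ha
    set δ := (S.lam t x u h - a) / 3 with hδ
    have hδ0 : 0 < δ := by rw [hδ]; linarith
    obtain ⟨_, ⟨z0, hz0, rfl⟩, hz1⟩ := exists_lt_of_lt_csSup (hne.image _)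
      (show S.lam t x u h - δ < S.lam t x u h by linarith)
    simp only at hz1
    set k : ℤ → ℝ := fun z => if z = z0 then max c (h z0 - δ) else c with hk
    have hk0 : ∀ z, c ≤ k z := by
      intro z; simp only [hk]; split_ifs
      · exact le_max_left _ _
      · exact le_rfl
    have hkh : ∀ z, k z ≤ h z := by
      intro z; simp only [hk]; split_ifs with hz
      · subst hz; exact max_le (hch _) (by linarith)
      · exact hch z
    have hkm : S.memBV k := S.memBV_of hh c 0 hk0 (by simpa using hkh)
    have hlim := (hA.2.2.1 t ht x _ hkm).2 u uu huu
    have hlow : a < S.lam t x u k := by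
      have h1 : k z0 - (S.I t x u z0).toReal ≤ S.lam t x u k :=
        le_csSup (S.bdd_lam hA ht x u hkm) ⟨z0, hz0, rfl⟩
      have h2 : h z0 - δ ≤ k z0 := by simp [hk]
      linarith
    filter_upwards [S.ev_Ioc, hlim.eventually (lt_mem_nhds hlow),
      (hptw z0).eventually (lt_mem_nhds (show h z0 - δ < h z0 by linarith))] with ε hε h1 h2
    refine lt_of_lt_of_le h1 (S.lamE_mono hA ht x _ hε (C := D) hk0 ?_
      (fun z => (hleH ε hε z).trans (hD z)))
    intro z; simp only [hk]; split_ifs with hz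
    · subst hz; exact max_le (hc ε hε _) h2.le
    · exact hc ε hε z
  · intro a ha
    set δ := (a - S.lam t x u h) / 2 with hδ
    have hδ0 : 0 < δ := by rw [hδ]; linarith
    obtain ⟨C, hC⟩ := S.rate_bound hA ht x u
    have hF := S.memBV_ev hH hA.1 (C - S.lam t x u h)
    rw [Filter.eventually_cofinite] at hF
    set F := {z | ¬ H z ≤ lam0 * S.V z - (C - S.lam t x u h)} with hFdef
    set k : ℤ → ℝ := fun z => if z ∈ F then h z + δ else H z with hk
    have hk0 : ∀ z, c ≤ k z := by
      intro z; simp only [hk]; split_ifs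
      · linarith [hch z]
      · linarith [hch z, hhH z]
    have hkH : ∀ z, k z ≤ H z + δ := by
      intro z; simp only [hk]; split_ifs
      · linarith [hhH z]
      · linarith
    have hkm : S.memBV k := S.memBV_of hH c δ hk0 hkH
    have hlim := (hA.2.2.1 t ht x _ hkm).2 u uu huu
    have hup : S.lam t x u k < a := by
      refine lt_of_le_of_lt (b := S.lam t x u h + δ) ?_ (by linarith)
      refine csSup_le (hne.image _) ?_
      rintro _ ⟨z, hz, rfl⟩
      simp only [hk]
      split_ifs with hzF
      · have : h z - (S.I t x u z).toReal ≤ S.lam t x u h := le_csSup hb ⟨z, hz, rfl⟩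
        linarith
      · have h1 : H z ≤ lam0 * S.V z - (C - S.lam t x u h) := not_not.1 hzF
        have := hC z hz
        linarith
    have hall : ∀ᶠ ε in 𝓝[>] (0 : ℝ), ∀ z ∈ F, hfam ε z < h z + δ :=
      (Filter.eventually_all_finite hF).2 fun z _ =>
        (hptw z).eventually (gt_mem_nhds (by linarith))
    filter_upwards [S.ev_Ioc, hlim.eventually (gt_mem_nhds hup), hall] with ε hε h1 h2
    refine lt_of_le_of_lt (S.lamE_mono hA ht x _ hε (C := D + δ) (hc ε hε) ?_
      (fun z => (hkH z).trans (by linarith [hD z]))) h1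
    intro z; simp only [hk]; split_ifs with hz
    · exact (h2 z hz).le
    · exact hleH ε hε z

end RSSetup

/-- Under Assumptions (A), (B) and (C): let `{h^ε} ∈ 𝓑_V` with `h^ε → h`
pointwise and let `ηε ε` be argmin selections for `u ↦ f_{t,t}(x,u) + Λ^ε_t(x,u;h^ε)`. Then
every sequence `ε_n → 0⁺` has a subsequence along which the selections converge pointwise on
`ℤ`, and every pointwise limit `η⁰` (along any sequence `ε_n → 0⁺`) is an argmin selection for
`u ↦ f_{t,t}(x,u) + Λ_t(x,u;h)`. -/
theorem statement13 {U : Type*} [MetricSpace U] [CompleteSpace U] [Nonempty U]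
    (S : RSSetup U) (lam0 : ℝ) (hA : S.AssumptionA lam0) (hB : S.AssumptionB)
    (hC : S.AssumptionC lam0)
    (hfam : ℝ → ℤ → ℝ) (hmem : S.memFam hfam)
    (h : ℤ → ℝ)
    (hptw : ∀ x : ℤ, Filter.Tendsto (fun ε => hfam ε x)
      (nhdsWithin 0 (Set.Ioi 0)) (nhds (h x)))
    (t : ℕ) (ht : t ∈ Finset.Icc 1 S.T)
    (ηε : ℝ → ℤ → U)
    (hηε : ∀ ε ∈ Set.Ioc (0 : ℝ) S.eps0, ∀ (x : ℤ) (u : U),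
      S.f t t x (ηε ε x) + S.lamE ε t x (ηε ε x) (hfam ε) ≤
        S.f t t x u + S.lamE ε t x u (hfam ε)) :
    (∀ εs : ℕ → ℝ, (∀ n, εs n ∈ Set.Ioc (0 : ℝ) S.eps0) →
      Filter.Tendsto εs Filter.atTop (nhds 0) →
      ∃ φ : ℕ → ℕ, StrictMono φ ∧ ∃ η0 : ℤ → U,
        ∀ x : ℤ, Filter.Tendsto (fun k => ηε (εs (φ k)) x) Filter.atTop (nhds (η0 x))) ∧
    (∀ εs : ℕ → ℝ, (∀ n, εs n ∈ Set.Ioc (0 : ℝ) S.eps0) →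
      Filter.Tendsto εs Filter.atTop (nhds 0) →
      ∀ η0 : ℤ → U,
        (∀ x : ℤ, Filter.Tendsto (fun n => ηε (εs n) x) Filter.atTop (nhds (η0 x))) →
        ∀ (x : ℤ) (u : U),
          S.f t t x (η0 x) + S.lam t x (η0 x) h ≤ S.f t t x u + S.lam t x u h) := by
  classical
  have htend : ∀ εs : ℕ → ℝ, (∀ n, εs n ∈ Set.Ioc (0 : ℝ) S.eps0) →
      Filter.Tendsto εs Filter.atTop (nhds 0) → Tendsto εs atTop (𝓝[>] (0 : ℝ)) :=
    fun εs h1 h2 => tendsto_nhdsWithin_iff.2 ⟨h2, Eventually.of_forall fun n => (h1 n).1⟩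
  have hconst : ∀ (x : ℤ) (u : U), Tendsto (fun ε => S.lamE ε t x u (hfam ε))
      (𝓝[>] (0 : ℝ)) (𝓝 (S.lam t x u h)) := fun x u =>
    S.key hA ht x u (fun _ => u) tendsto_const_nhds hfam hmem h hptw
  constructor
  · intro εs h1 h2
    obtain ⟨u0⟩ := ‹Nonempty U›
    obtain ⟨-, ⟨c, hc⟩, hbdd, hH⟩ := id hmem
    obtain ⟨D, hD⟩ := S.memBV_le hH hA.1
    have hcpt : ∀ x : ℤ, ∃ K : ℝ, ∀ n, S.f t t x (ηε (εs n) x) ≤ K := by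
      intro x
      obtain ⟨M, hM⟩ := ((hconst x u0).comp (htend εs h1 h2)).bddAbove_range
      refine ⟨S.f t t x u0 + M - c, fun n => ?_⟩
      have h3 := hηε (εs n) (h1 n) x u0
      have h4 : S.lamE (εs n) t x u0 (hfam (εs n)) ≤ M := hM ⟨n, rfl⟩
      have h5 : S.lamE (εs n) t x (ηε (εs n) x) (fun _ => c) ≤
          S.lamE (εs n) t x (ηε (εs n) x) (hfam (εs n)) :=
        S.lamE_mono hA ht x _ (h1 n) (C := D) (fun _ => le_rfl) (hc _ (h1 n))
          (fun z => le_trans (le_csSup (hbdd z) ⟨_, h1 n, rfl⟩) (hD z))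
      rw [S.lamE_const ht x _ (h1 n)] at h5
      linarith
    choose K hK using hcpt
    have hcomp : IsCompact (Set.univ.pi fun x : ℤ => {u : U | S.f t t x u ≤ K x}) :=
      isCompact_univ_pi fun x => hB.2.2.2 t ht x (K x)
    obtain ⟨η0, -, φ, hφ, hlim⟩ := hcomp.tendsto_subseq (x := fun n => ηε (εs n))
      (fun n x _ => hK x n)
    exact ⟨φ, hφ, η0, fun x => (tendsto_pi_nhds.1 hlim) x⟩
  · intro εs h1 h2 η0 hη0 x u
    set uu : ℝ → U := fun ε => if ε ∈ Set.range εs then ηε ε x else η0 x with huu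
    have huut : Tendsto uu (𝓝[>] (0 : ℝ)) (𝓝 (η0 x)) := by
      intro W hW
      obtain ⟨N, hN⟩ := eventually_atTop.1 ((hη0 x).eventually hW)
      have hsm : ∀ᶠ ε in 𝓝[>] (0 : ℝ), ∀ n ∈ Set.Iio N, ε < εs n :=
        (Filter.eventually_all_finite (Set.finite_Iio N)).2 fun n _ =>
          mem_nhdsWithin_of_mem_nhds (gt_mem_nhds (h1 n).1)
      change ∀ᶠ ε in 𝓝[>] (0 : ℝ), uu ε ∈ W
      filter_upwards [hsm] with ε hε
      simp only [huu]
      split_ifs with hr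
      · obtain ⟨n, rfl⟩ := hr
        apply hN
        by_contra hn
        exact lt_irrefl _ (hε n (not_le.1 hn))
      · exact mem_of_mem_nhds hW
    have hL := (S.key hA ht x (η0 x) uu huut hfam hmem h hptw).comp (htend εs h1 h2)
    have hR := (hconst x u).comp (htend εs h1 h2)
    have hf := ((hB.2.2.1 t ht x).tendsto (η0 x)).comp (hη0 x)
    refine le_of_tendsto_of_tendsto' (hf.add hL) (hR.const_add (S.f t t x u)) fun n => ?_
    have : uu (εs n) = ηε (εs n) x := by simp [huu]
    simp only [Function.comp, this]
    exact hηε (εs n) (h1 n) x u
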